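/- Let X ⊆ ℝ be such that (X[≤])² is a normal topological space. If there exists a strictly decreasing function f : X → X (not necessarily continuous with respect to the Euclidean topology), then there is a countable set C ⊆ X such that X \ C is a Q-set. -/

import Mathlib

/-- The Sorgenfrey (lower limit) topology on `ℝ`, generated by half-open
intervals `[a, b)` with `a < b`. -/
def sorgenfrey : TopologicalSpace ℝ :=
  TopologicalSpace.generateFrom {s : Set ℝ | ∃ a b : ℝ, a < b ∧ s = Set.Ico a b}

/-- The Sorgenfrey subspace topology on a set of reals `X`, i.e. `X[≤]`. -/
def sorgenfreySub (X : Set ℝ) : TopologicalSpace X :=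
  sorgenfrey.induced Subtype.val

/-- The product topology `(X[≤])²` on `X × X`. -/
def sorgenfreySq (X : Set ℝ) : TopologicalSpace (X × X) :=
  @instTopologicalSpaceProd X X (sorgenfreySub X) (sorgenfreySub X)

/-- A set of reals `X` is a Q-set if every subset of `X` is a relative `Gδ`-set
in `X` with respect to the Euclidean subspace topology. -/
def IsQSet (X : Set ℝ) : Prop :=
  ∀ A : Set ℝ, A ⊆ X → IsGδ (Subtype.val ⁻¹' A : Set X)

/-!
A neighbourhood of a point `p` of a Sorgenfrey product is exactly an element of `𝓝[≥] p`, taken in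
the Euclidean topology and the product order. Since no point of the graph of a strictly decreasing
function lies strictly below and to the left of another one, every `p` has such a neighbourhood
meeting the graph in at most two points, so each subset of the graph is closed in the Sorgenfrey
product. Normality therefore separates the graph over `A` from the graph over the complement of `A`
by disjoint sets `V` and `U`. If two points lie close to each other, their supremum is above and
close to both of them. Hence no point with upper neighbourhood `V` is a Euclidean limit of points
around which `U` contains an upper ball of a fixed radius, and `A` is cut out on the graph by a
Euclidean `Gδ` set. This pulls back to the set of continuity points of the function, and a monotone
function has only countably many points of discontinuity.
-/

open Filter Set Topology

instance instContinuousSupProd {L M : Type*} [TopologicalSpace L] [TopologicalSpace M] [Max L]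
    [Max M] [ContinuousSup L] [ContinuousSup M] : ContinuousSup (L × M) where
  continuous_sup := by
    simp only [Prod.sup_def]
    fun_prop

section UpperNeighborhoods

variable {P : Type*} [PseudoMetricSpace P]

/-- The erosion of `U` by upper balls of radius `ε`: the points `p` all of whose upper bounds at
distance less than `ε` from `p` lie in `U`. It makes "`U` is an upper neighbourhood of `p`"
uniform in `p`. -/
def upperErosion [Preorder P] (ε : ℝ) (U : Set P) : Set P :=
  {p | Metric.ball p ε ∩ Ici p ⊆ U}

theorem exists_mem_upperErosion [Preorder P] {U : Set P} {p : P} (hU : U ∈ 𝓝[≥] p) :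
    ∃ n : ℕ, p ∈ upperErosion (1 / ((n : ℝ) + 1)) U := by
  obtain ⟨ε, hε, hball⟩ := Metric.mem_nhdsWithin_iff.1 hU
  obtain ⟨n, hn⟩ := exists_nat_one_div_lt hε
  exact ⟨n, (inter_subset_inter_left _ (Metric.ball_subset_ball hn.le)).trans hball⟩

theorem notMem_closure_upperErosion [SemilatticeSup P] [ContinuousSup P] {U V : Set P}
    (hUV : Disjoint U V) {p : P} (hV : V ∈ 𝓝[≥] p) {ε : ℝ} (hε : 0 < ε) :
    p ∉ closure (upperErosion ε U) := by
  intro hp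
  have tendsto_sup : Tendsto (fun x => x ⊔ p) (𝓝 p) (𝓝 p) := by
    simpa only [id_eq, sup_idem] using
      (tendsto_id (x := 𝓝 p)).sup_nhds (tendsto_const_nhds (x := p))
  have sup_mem_V : ∀ᶠ x in 𝓝 p, x ⊔ p ∈ V :=
    (tendsto_nhdsWithin_iff.2 ⟨tendsto_sup, .of_forall fun _ => le_sup_right⟩).eventually hV
  have sup_mem_ball : ∀ᶠ x in 𝓝 p, x ⊔ p ∈ Metric.ball x ε := by
    have tendsto_dist : Tendsto (fun x => dist (x ⊔ p) x) (𝓝 p) (𝓝 0) := by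
      simpa only [id_eq, dist_self] using tendsto_sup.dist tendsto_id
    exact tendsto_dist.eventually_lt_const hε
  obtain ⟨x, hxU, hxV, hxball⟩ :=
    ((mem_closure_iff_frequently.1 hp).and_eventually (sup_mem_V.and sup_mem_ball)).exists
  exact disjoint_left.1 hUV (hxU ⟨hxball, le_sup_left⟩) hxV

theorem exists_isGδ_superset_disjoint [SemilatticeSup P] [ContinuousSup P] {s t U V : Set P}
    (hV : ∀ p ∈ s, V ∈ 𝓝[≥] p) (hU : ∀ p ∈ t, U ∈ 𝓝[≥] p) (hUV : Disjoint U V) :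
    ∃ W : Set P, IsGδ W ∧ s ⊆ W ∧ Disjoint W t := by
  refine ⟨⋂ n : ℕ, (closure (upperErosion (1 / ((n : ℝ) + 1)) U))ᶜ,
    .iInter_of_isOpen fun _ => isClosed_closure.isOpen_compl, fun p hp => mem_iInter.2 fun _ =>
      notMem_closure_upperErosion hUV (hV p hp) Nat.one_div_pos_of_nat,
    disjoint_left.2 fun p hpW hpt => ?_⟩
  obtain ⟨n, hn⟩ := exists_mem_upperErosion (hU p hpt)
  exact mem_iInter.1 hpW n (subset_closure hn)

end UpperNeighborhoods

theorem isClosed_image_of_finite_preimage_nhds {α β : Type*} [TopologicalSpace β] [T1Space β]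
    {g : α → β} (hg : ∀ p, ∃ t ∈ 𝓝 p, (g ⁻¹' t).Finite) (s : Set α) : IsClosed (g '' s) := by
  have locallyFinite_singleton : LocallyFinite fun x => ({g x} : Set β) := fun p => by
    simpa only [singleton_inter_nonempty, preimage] using hg p
  rw [← biUnion_of_singleton (g '' s), biUnion_image, biUnion_eq_iUnion]
  exact (locallyFinite_singleton.comp_injective Subtype.val_injective).isClosed_iUnion
    fun _ => isClosed_singleton

theorem exists_mem_nhdsGE_finite_preimage_graph {α β : Type*} [LinearOrder α]
    [TopologicalSpace α] [ClosedIciTopology α] [LinearOrder β] [TopologicalSpace β]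
    [ClosedIciTopology β] {f : α → β} (hf : StrictAnti f) (p : α × β) :
    ∃ t ∈ 𝓝[≥] p, ((fun x => (x, f x)) ⁻¹' t).Finite := by
  by_cases hp : ∃ x, p.1 < x ∧ p.2 < f x
  · obtain ⟨x, hx, hfx⟩ := hp
    refine ⟨Iio x ×ˢ Iio (f x), mem_nhdsWithin_of_mem_nhds
      (prod_mem_nhds (Iio_mem_nhds hx) (Iio_mem_nhds hfx)), ?_⟩
    have disjoint_graph : (fun y => (y, f y)) ⁻¹' (Iio x ×ˢ Iio (f x)) = ∅ :=
      eq_empty_of_forall_notMem fun y hy => (hf hy.1).not_gt hy.2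
    exact disjoint_graph ▸ finite_empty
  · push Not at hp
    have graph_subset : (fun x => (x, f x)) ⁻¹' Ici p ⊆ {p.1} ∪ f ⁻¹' {p.2} := by
      rintro x ⟨hx, hfx⟩
      exact hx.eq_or_lt.imp Eq.symm fun hlt => (hp x hlt).antisymm hfx
    exact ⟨Ici p, self_mem_nhdsWithin, ((finite_singleton p.1).union
      ((finite_singleton p.2).preimage hf.injective.injOn)).subset graph_subset⟩

theorem nhds_sorgenfrey (x : ℝ) : @nhds ℝ sorgenfrey x = 𝓝[≥] x := by
  refine le_antisymm ?_ ?_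
  · refine (nhdsGE_basis x).ge_iff.2 fun b hb => ?_
    exact @IsOpen.mem_nhds _ sorgenfrey _ _
      (TopologicalSpace.isOpen_generateFrom_of_mem ⟨x, b, hb, rfl⟩) (left_mem_Ico.2 hb)
  · rw [sorgenfrey, TopologicalSpace.nhds_generateFrom]
    refine le_iInf₂ fun s hs => le_principal_iff.2 ?_
    obtain ⟨hxs, a, b, -, rfl⟩ := hs
    exact mem_of_superset (Ico_mem_nhdsGE hxs.2) (Ico_subset_Ico_left hxs.1)

theorem nhds_sorgenfreySub {X : Set ℝ} (x : X) : @nhds X (sorgenfreySub X) x = 𝓝[≥] x := by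
  rw [sorgenfreySub, @nhds_induced _ _ sorgenfrey, nhds_sorgenfrey, nhdsWithin, comap_inf,
    comap_principal, ← nhds_subtype_eq_comap]
  rfl

/-- The product `X[≤] × Y[≤]` of two Sorgenfrey subspaces; `sorgenfreySq X` is the case `Y = X`. -/
abbrev sorgenfreyProd (X Y : Set ℝ) : TopologicalSpace (X × Y) :=
  @instTopologicalSpaceProd X Y (sorgenfreySub X) (sorgenfreySub Y)

section SorgenfreyProd

variable {X Y : Set ℝ}

theorem nhds_sorgenfreyProd (p : X × Y) : @nhds (X × Y) (sorgenfreyProd X Y) p = 𝓝[≥] p := by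
  rw [sorgenfreyProd, @nhds_prod_eq _ _ (sorgenfreySub X) (sorgenfreySub Y), nhds_sorgenfreySub,
    nhds_sorgenfreySub, ← nhdsWithin_prod_eq, Ici_prod_eq]

theorem t1Space_sorgenfreyProd : @T1Space (X × Y) (sorgenfreyProd X Y) := by
  have finer : sorgenfreyProd X Y ≤ instTopologicalSpaceProd :=
    le_of_nhds_le_nhds fun p => (nhds_sorgenfreyProd p).trans_le nhdsWithin_le_nhds
  exact t1Space_antitone finer inferInstance

theorem isClosed_sorgenfreyProd_image_graph {f : X → Y} (hf : StrictAnti f) (s : Set X) :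
    IsClosed[sorgenfreyProd X Y] ((fun x => (x, f x)) '' s) := by
  refine @isClosed_image_of_finite_preimage_nhds _ _ (sorgenfreyProd X Y) t1Space_sorgenfreyProd _
    (fun p => ?_) s
  rw [nhds_sorgenfreyProd]
  exact exists_mem_nhdsGE_finite_preimage_graph hf p

theorem exists_isGδ_preimage_graph_eq (hnorm : @NormalSpace (X × Y) (sorgenfreyProd X Y))
    {f : X → Y} (hf : StrictAnti f) (s : Set X) :
    ∃ W : Set (X × Y), IsGδ W ∧ (fun x => (x, f x)) ⁻¹' W = s := by
  have graph_injective : Function.Injective fun x => (x, f x) := fun _ _ h => congrArg Prod.fst h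
  obtain ⟨V, U, hV, hU, hsV, htU, hVU⟩ := @NormalSpace.normal _ (sorgenfreyProd X Y) hnorm _ _
    (isClosed_sorgenfreyProd_image_graph hf s) (isClosed_sorgenfreyProd_image_graph hf sᶜ)
    ((disjoint_image_iff graph_injective).2 disjoint_compl_right)
  have mem_nhdsGE (O : Set (X × Y)) (hO : IsOpen[sorgenfreyProd X Y] O) (p) (hp : p ∈ O) :
      O ∈ 𝓝[≥] p := by
    rw [← nhds_sorgenfreyProd]
    exact @IsOpen.mem_nhds _ (sorgenfreyProd X Y) p O hO hp
  obtain ⟨W, hW, hsW, hWt⟩ := exists_isGδ_superset_disjoint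
    (fun p hp => mem_nhdsGE V hV p (hsV hp)) (fun p hp => mem_nhdsGE U hU p (htU hp)) hVU.symm
  refine ⟨W, hW, Subset.antisymm (fun x hx => ?_) (image_subset_iff.1 hsW)⟩
  by_contra hxs
  exact disjoint_left.1 hWt hx (mem_image_of_mem _ hxs)

end SorgenfreyProd

theorem stmt3_general (X Y : Set ℝ) (hnorm : @NormalSpace (X × Y) (sorgenfreyProd X Y))
    (f : ℝ → ℝ) (hfa : StrictAntiOn f X) (hfm : MapsTo f X Y) :
    ∃ C : Set ℝ, C.Countable ∧ C ⊆ X ∧ IsQSet (X \ C) := by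
  let C := {x ∈ X | ¬ContinuousWithinAt f X x}
  refine ⟨C, hfa.antitoneOn.countable_not_continuousWithinAt, sep_subset _ _, fun A _ => ?_⟩
  let F : X → Y := hfm.restrict
  have strictAnti_F : StrictAnti F := fun x y hxy => hfa x.2 y.2 hxy
  let ι : ↥(X \ C) → X := inclusion sdiff_subset
  have continuous_ι : Continuous ι := continuous_inclusion sdiff_subset
  have continuous_F_ι : Continuous (F ∘ ι) := by
    refine continuous_induced_rng.2 (continuous_iff_continuousAt.2 fun x => ?_)
    have hx : ContinuousWithinAt f X x := by_contra fun h => x.2.2 ⟨x.2.1, h⟩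
    exact ((continuousWithinAt_iff_continuousAt_domRestrict f x.2.1).1 hx).comp
      (f := ι) continuous_ι.continuousAt
  obtain ⟨W, hW, hWA⟩ := exists_isGδ_preimage_graph_eq hnorm strictAnti_F (Subtype.val ⁻¹' A)
  have preimage_eq : (Subtype.val ⁻¹' A : Set ↥(X \ C)) = (fun x => (ι x, F (ι x))) ⁻¹' W :=
    congrArg (ι ⁻¹' ·) hWA.symm
  rw [preimage_eq]
  exact hW.preimage (continuous_ι.prodMk continuous_F_ι)

/-- If `(X[≤])²` is normal and there is a strictly decreasing
function `f : X → X` (no continuity assumed), then `X \ C` is a Q-set for some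
countable `C ⊆ X`. -/
theorem stmt3 (X : Set ℝ) (hnorm : @NormalSpace (X × X) (sorgenfreySq X))
    (f : ℝ → ℝ) (hfa : StrictAntiOn f X) (hfm : Set.MapsTo f X X) :
    ∃ C : Set ℝ, C.Countable ∧ C ⊆ X ∧ IsQSet (X \ C) :=
  stmt3_general X X hnorm f hfa hfm
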